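/- Let (G,c,o) be a recurrent rooted network, and for each integer n ≥ 1 let ψ_{r_n} be a potential and r_n an integer chosen so that min_{v∈∂B(o,r_n)} ψ_{r_n}(v) ≥ n·2^n. Then h := Σ_{n≥1} 2^{-n} ψ_{r_n} is a potential, and for each n the set {v ∈ V : h(v) < n} is contained in B(o,r_n) and hence finite; in particular h tends to infinity. -/

import Mathlib

open scoped ENNReal
open Filter Topology Classical
noncomputable section

/-- A rooted network: a connected, locally finite simple graph with positive
symmetric edge conductances (extended by `0` to non-edges) and a root `o`. -/
structure RootedNetwork (V : Type*) where
  G : SimpleGraph V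
  locallyFinite : ∀ x : V, (G.neighborSet x).Finite
  connected : G.Connected
  c : V → V → ℝ
  c_symm : ∀ x y, c x y = c y x
  c_pos : ∀ x y, G.Adj x y → 0 < c x y
  c_eq_zero : ∀ x y, ¬ G.Adj x y → c x y = 0
  o : V

namespace RootedNetwork

variable {V : Type*}

/-- The vertex weight `c_x = Σ_{z ∼ x} c_{xz}`. -/
noncomputable def cv (N : RootedNetwork V) (x : V) : ℝ := ∑' y, N.c x y

/-- The transition probability `p(x,y) = c_{xy} / c_x` of the network random walk. -/
noncomputable def p (N : RootedNetwork V) (x y : V) : ℝ≥0∞ :=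
  ENNReal.ofReal (N.c x y / N.cv x)

/-- The probability that the network random walk started at `x` begins with the
given finite sequence of steps. -/
noncomputable def pathProb (N : RootedNetwork V) : V → List V → ℝ≥0∞
  | _, [] => 1
  | x, y :: l => N.p x y * pathProb N y l

/-- The probability, starting from `x`, that the walk ever visits `b`
(`P_x(τ_b < ∞)`), computed by decomposing over the finite path up to the first
visit of `b`. -/
noncomputable def hitProb (N : RootedNetwork V) (x b : V) : ℝ≥0∞ :=
  if x = b then 1
  else ∑' l : {l : List V // l.getLast? = some b ∧ b ∉ l.dropLast}, N.pathProb x l.1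

/-- A rooted network is recurrent if the walk started from any vertex almost
surely visits the root `o`. -/
def Recurrent (N : RootedNetwork V) : Prop := ∀ x : V, N.hitProb x N.o = 1

/-- The Green kernel `G_o(x,y) = Σ_{n ≥ 0} P_x(X_n = y, τ_o > n)` of the walk
killed at the root, computed as a sum over finite paths from `x` to `y`
avoiding `o` (the `n = 0` term is the first summand). -/
noncomputable def GreenKer (N : RootedNetwork V) (x y : V) : ℝ≥0∞ :=
  (if x = y ∧ x ≠ N.o then 1 else 0) +
    ∑' l : {l : List V // l.getLast? = some y ∧ N.o ∉ x :: l}, N.pathProb x l.1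

/-- The Green density `g_o(x,y) = G_o(x,y) / c_y`. -/
noncomputable def greenDensity (N : RootedNetwork V) (x y : V) : ℝ≥0∞ :=
  N.GreenKer x y / ENNReal.ofReal (N.cv y)

/-- The network Laplacian `Δ f (v) = Σ_{x ∼ v} c_{vx} (f(x) - f(v))`. -/
noncomputable def lap (N : RootedNetwork V) (f : V → ℝ) (v : V) : ℝ :=
  ∑' x, N.c v x * (f x - f v)

/-- A potential: a nonnegative function vanishing at `o`, with Laplacian `1`
at `o`, harmonic everywhere else. -/
def IsPotential (N : RootedNetwork V) (h : V → ℝ) : Prop :=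
  (∀ v, 0 ≤ h v) ∧ h N.o = 0 ∧ N.lap h N.o = 1 ∧ ∀ v, v ≠ N.o → N.lap h v = 0

end RootedNetwork

/-!
The Laplacian commutes with pointwise convergent sums because every vertex has finitely many
neighbours, and the sum converges because potentials are bounded at each vertex uniformly: along an
edge `x ∼ y` one has `c_{xy} h(y) ≤ Δh(x) + c_x h(x) ≤ 1 + c_x h(x)`, starting from `h(o) = 0`.

Recurrence enters through a minimum principle. If `u ≥ 0` is superharmonic off `o`, then
`u(o) P_x(τ_o < ∞) ≤ u(x)`, by induction on the number of steps allowed to reach `o`; so `u ≥ u(o)`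
on a recurrent network. Raising a potential inside a ball to its minimum over the sphere and then
truncating at that value produces such a `u`, hence the potential is at least this minimum outside
the ball. A single term `2⁻ⁿ ψ_n` therefore already forces `h ≥ n` outside `B(o, r_n)`.
-/

theorem tsum_list_eq_tsum_cons {α : Type*} {f : List α → ℝ≥0∞} (hf : f [] = 0) :
    ∑' l, f l = ∑' (a) (l), f (a :: l) := by
  have cons_injective : Function.Injective fun q : α × List α => q.1 :: q.2 := by
    rintro ⟨a, l⟩ ⟨b, m⟩ h
    simpa using h
  rw [← ENNReal.tsum_prod, cons_injective.tsum_eq]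
  rintro (_ | ⟨a, l⟩) hl
  · exact absurd hf hl
  · exact ⟨(a, l), rfl⟩

theorem tsum_ite_one_le {M : Type*} [AddCommMonoid M] [TopologicalSpace M] (f : ℕ → M) :
    (∑' n, if 1 ≤ n then f n else 0) = ∑' n, f (n + 1) := by
  rw [← (add_left_injective 1).tsum_eq]
  · simp
  · rintro (_ | n) hn
    · simp at hn
    · exact ⟨n, rfl⟩

theorem exists_adj_dist_lt {V : Type*} {G : SimpleGraph V} (hG : G.Connected) {u v : V}
    (hne : v ≠ u) : ∃ x, G.Adj x v ∧ G.dist u x < G.dist u v := by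
  obtain ⟨q, hq⟩ := hG.exists_walk_length_eq_dist v u
  cases q with
  | nil => exact absurd rfl hne
  | @cons _ x _ hvx q =>
    refine ⟨x, hvx.symm, ?_⟩
    rw [G.dist_comm (u := u) (v := v), ← hq, G.dist_comm]
    exact Nat.lt_succ_of_le (SimpleGraph.dist_le q)

theorem finite_setOf_dist_lt {V : Type*} {G : SimpleGraph V} (hG : G.Connected)
    (hfin : ∀ x, (G.neighborSet x).Finite) (u : V) (r : ℕ) : {w | G.dist u w < r}.Finite := by
  induction r with
  | zero => simp
  | succ r ih =>
    refine ((ih.biUnion fun x _ => hfin x).insert u).subset fun w hw => ?_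
    rw [Set.mem_insert_iff, or_iff_not_imp_left]
    intro hne
    obtain ⟨x, hxw, hlt⟩ := exists_adj_dist_lt hG hne
    exact Set.mem_biUnion (hlt.trans_le (Nat.le_of_lt_succ hw)) hxw

namespace RootedNetwork

variable {V : Type*} (N : RootedNetwork V)

section Laplacian

/-- The finite set of neighbours of `x`, over which the sums defining `cv` and `lap` range. -/
def neighborFinset (x : V) : Finset V := (N.locallyFinite x).toFinset

variable {N} in
theorem mem_neighborFinset {x y : V} : y ∈ N.neighborFinset x ↔ N.G.Adj x y := by
  simp [neighborFinset]

theorem c_eq_zero_of_notMem {x y : V} (h : y ∉ N.neighborFinset x) : N.c x y = 0 :=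
  N.c_eq_zero x y (mt mem_neighborFinset.2 h)

theorem c_nonneg (x y : V) : 0 ≤ N.c x y := by
  by_cases h : N.G.Adj x y
  · exact (N.c_pos x y h).le
  · exact (N.c_eq_zero x y h).ge

theorem cv_nonneg (x : V) : 0 ≤ N.cv x :=
  tsum_nonneg (N.c_nonneg x)

theorem lap_eq_sum (f : V → ℝ) (x : V) :
    N.lap f x = ∑ y ∈ N.neighborFinset x, N.c x y * (f y - f x) :=
  tsum_eq_sum fun _ hy => by rw [N.c_eq_zero_of_notMem hy, zero_mul]

theorem lap_eq_sum_sub (f : V → ℝ) (x : V) :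
    N.lap f x = ∑ y ∈ N.neighborFinset x, N.c x y * f y - N.cv x * f x := by
  rw [lap_eq_sum, cv, tsum_eq_sum fun _ hy => N.c_eq_zero_of_notMem hy, Finset.sum_mul,
    ← Finset.sum_sub_distrib]
  simp only [mul_sub]

theorem lap_const (a : ℝ) (x : V) : N.lap (fun _ => a) x = 0 := by
  simp [lap]

theorem lap_const_mul (a : ℝ) (f : V → ℝ) (x : V) :
    N.lap (fun v => a * f v) x = a * N.lap f x := by
  simp only [lap, ← tsum_mul_left, ← mul_sub, mul_left_comm]

theorem hasSum_lap {ι : Type*} {f : ι → V → ℝ} {F : V → ℝ}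
    (hf : ∀ v, HasSum (fun i => f i v) (F v)) (x : V) :
    HasSum (fun i => N.lap (f i) x) (N.lap F x) := by
  simp only [lap_eq_sum]
  exact hasSum_sum fun y _ => ((hf y).sub (hf x)).mul_left (N.c x y)

variable {N}

theorem lap_le_lap {f g : V → ℝ} {x : V} (hx : g x ≤ f x) (h : ∀ y, N.G.Adj x y → f y ≤ g y) :
    N.lap f x ≤ N.lap g x := by
  simp only [lap_eq_sum]
  refine Finset.sum_le_sum fun y hy => mul_le_mul_of_nonneg_left ?_ (N.c_nonneg x y)
  exact sub_le_sub (h y (mem_neighborFinset.1 hy)) hx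

theorem lap_min_const_nonpos {f : V → ℝ} {m : ℝ} {x : V} (h : f x < m → N.lap f x ≤ 0) :
    N.lap (fun v => min (f v) m) x ≤ 0 := by
  rcases lt_or_ge (f x) m with hlt | hge
  · calc N.lap (fun v => min (f v) m) x
        ≤ N.lap f x := lap_le_lap (le_min le_rfl hlt.le) fun _ _ => min_le_left _ _
      _ ≤ 0 := h hlt
  · calc N.lap (fun v => min (f v) m) x
        ≤ N.lap (fun _ => m) x := lap_le_lap (le_min hge le_rfl) fun _ _ => min_le_right _ _
      _ = 0 := N.lap_const m x

theorem c_mul_le_lap_add {f : V → ℝ} (hf : ∀ v, 0 ≤ f v) {x y : V} (hxy : N.G.Adj x y) :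
    N.c x y * f y ≤ N.lap f x + N.cv x * f x := by
  rw [lap_eq_sum_sub, sub_add_cancel]
  exact Finset.single_le_sum (f := fun z => N.c x z * f z)
    (fun z _ => mul_nonneg (N.c_nonneg x z) (hf z)) (mem_neighborFinset.2 hxy)

theorem tsum_p_mul_ofReal_le {u : V → ℝ} (hu : ∀ v, 0 ≤ u v) {x : V} (hx : N.lap u x ≤ 0) :
    ∑' y, N.p x y * ENNReal.ofReal (u y) ≤ ENNReal.ofReal (u x) := by
  have hp_nonneg (y : V) : 0 ≤ N.c x y / N.cv x := div_nonneg (N.c_nonneg x y) (N.cv_nonneg x)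
  calc ∑' y, N.p x y * ENNReal.ofReal (u y)
      = ∑ y ∈ N.neighborFinset x, ENNReal.ofReal (N.c x y / N.cv x * u y) := by
        rw [tsum_eq_sum (s := N.neighborFinset x) fun y hy => by simp [p, N.c_eq_zero_of_notMem hy]]
        simp only [p, ENNReal.ofReal_mul (hp_nonneg _)]
    _ = ENNReal.ofReal ((∑ y ∈ N.neighborFinset x, N.c x y * u y) / N.cv x) := by
        rw [← ENNReal.ofReal_sum_of_nonneg fun y _ => mul_nonneg (hp_nonneg y) (hu y),
          Finset.sum_div]
        simp only [div_mul_eq_mul_div]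
    _ ≤ ENNReal.ofReal (u x) := by
        rw [lap_eq_sum_sub, sub_nonpos, mul_comm] at hx
        exact ENNReal.ofReal_le_ofReal (div_le_of_le_mul₀ (N.cv_nonneg x) (hu x) hx)

end Laplacian

section HittingProbability

/-- The step sequences of length at most `k` that visit `b` at their last step and not before. -/
def firstPassagePaths (b : V) (k : ℕ) : Set (List V) :=
  {l | (l.getLast? = some b ∧ b ∉ l.dropLast) ∧ l.length ≤ k}

theorem nil_notMem_firstPassagePaths (b : V) (k : ℕ) : [] ∉ firstPassagePaths b k := by
  simp [firstPassagePaths]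

theorem cons_mem_firstPassagePaths {b y : V} {k : ℕ} {l : List V} :
    y :: l ∈ firstPassagePaths b (k + 1) ↔ if y = b then l = [] else l ∈ firstPassagePaths b k := by
  split_ifs with h
  · cases l <;> simp [firstPassagePaths, h]
  · cases l <;> simp [firstPassagePaths, h, Ne.symm h]

/-- The probability that the walk started at `x` visits `b` at one of the times `1, …, k`; unlike
`hitProb`, it does not count the starting point as a visit. -/
def hitProbWithin (b : V) (k : ℕ) (x : V) : ℝ≥0∞ :=
  ∑' l, (firstPassagePaths b k).indicator (N.pathProb x) l

theorem hitProbWithin_zero (b x : V) : N.hitProbWithin b 0 x = 0 := by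
  have hempty : firstPassagePaths b 0 = ∅ := by
    refine Set.eq_empty_of_forall_notMem fun l hl => nil_notMem_firstPassagePaths b 0 ?_
    rwa [List.length_eq_zero_iff.1 (Nat.le_zero.1 hl.2)] at hl
  simp [hitProbWithin, hempty]

theorem hitProbWithin_succ (b : V) (k : ℕ) (x : V) :
    N.hitProbWithin b (k + 1) x =
      ∑' y, N.p x y * if y = b then 1 else N.hitProbWithin b k y := by
  rw [hitProbWithin,
    tsum_list_eq_tsum_cons (Set.indicator_of_notMem (nil_notMem_firstPassagePaths b _) _)]
  refine tsum_congr fun y => ?_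
  simp only [Set.indicator_apply, cons_mem_firstPassagePaths, pathProb]
  split_ifs with hy
  · rw [tsum_eq_single [] fun l hl => if_neg hl, if_pos rfl, pathProb]
  · simp only [hitProbWithin, Set.indicator_apply, ← ENNReal.tsum_mul_left, mul_ite, mul_zero]

theorem hitProb_le_iSup_hitProbWithin {b x : V} (hx : x ≠ b) :
    N.hitProb x b ≤ ⨆ k, N.hitProbWithin b k x := by
  rw [hitProb, if_neg hx, ENNReal.tsum_eq_iSup_sum]
  refine iSup_le fun s => ?_
  set k := s.sup fun l => l.1.length
  have hmem (l) (hl : l ∈ s) : l.1 ∈ firstPassagePaths b k :=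
    ⟨l.2, Finset.le_sup (f := fun l => l.1.length) hl⟩
  calc ∑ l ∈ s, N.pathProb x l.1
      = ∑ l ∈ s.map (Function.Embedding.subtype _),
          (firstPassagePaths b k).indicator (N.pathProb x) l := by
        rw [Finset.sum_map]
        exact Finset.sum_congr rfl fun l hl => (Set.indicator_of_mem (hmem l hl) _).symm
    _ ≤ N.hitProbWithin b k x := ENNReal.sum_le_tsum _
    _ ≤ ⨆ k, N.hitProbWithin b k x := le_iSup (N.hitProbWithin b · x) k

variable {N} {b : V} {u : V → ℝ≥0∞}

theorem mul_hitProbWithin_le (hu : ∀ x, x ≠ b → ∑' y, N.p x y * u y ≤ u x) (k : ℕ) {x : V}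
    (hx : x ≠ b) : u b * N.hitProbWithin b k x ≤ u x := by
  induction k generalizing x with
  | zero => simp [hitProbWithin_zero]
  | succ k ih =>
    rw [hitProbWithin_succ, ← ENNReal.tsum_mul_left]
    refine le_trans (ENNReal.tsum_le_tsum fun y => ?_) (hu x hx)
    rw [mul_left_comm]
    gcongr
    split_ifs with hy
    · rw [mul_one, hy]
    · exact ih hy

theorem mul_hitProb_le (hu : ∀ x, x ≠ b → ∑' y, N.p x y * u y ≤ u x) (x : V) :
    u b * N.hitProb x b ≤ u x := by
  by_cases hx : x = b
  · simp [hitProb, hx]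
  · calc u b * N.hitProb x b
        ≤ u b * ⨆ k, N.hitProbWithin b k x := by gcongr; exact N.hitProb_le_iSup_hitProbWithin hx
      _ = ⨆ k, u b * N.hitProbWithin b k x := ENNReal.mul_iSup ..
      _ ≤ u x := iSup_le fun k => mul_hitProbWithin_le hu k hx

end HittingProbability

variable {N}

section MinimumPrinciple

theorem Recurrent.root_le_of_lap_nonpos (hrec : N.Recurrent) {u : V → ℝ} (hu : ∀ v, 0 ≤ u v)
    (hlap : ∀ x, x ≠ N.o → N.lap u x ≤ 0) (x : V) : u N.o ≤ u x := by
  have h := mul_hitProb_le (u := fun v => ENNReal.ofReal (u v))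
    (fun y hy => tsum_p_mul_ofReal_le hu (hlap y hy)) x
  rw [hrec x, mul_one] at h
  exact (ENNReal.ofReal_le_ofReal_iff (hu x)).1 h

theorem Recurrent.le_of_le_root (hrec : N.Recurrent) {f : V → ℝ} (hf : ∀ v, 0 ≤ f v) {m : ℝ}
    (hroot : m ≤ f N.o) (hlap : ∀ x, f x < m → N.lap f x ≤ 0) (x : V) : m ≤ f x := by
  rcases le_total m 0 with hm | hm
  · exact hm.trans (hf x)
  have h := hrec.root_le_of_lap_nonpos (fun v => le_min (hf v) hm)
    (fun y _ => lap_min_const_nonpos (hlap y)) x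
  rw [min_eq_right hroot] at h
  exact h.trans (min_le_left _ _)

theorem Recurrent.le_of_le_on_sphere (hrec : N.Recurrent) {f : V → ℝ} (hf : ∀ v, 0 ≤ f v)
    {r : ℕ} (hlap : ∀ x, r < N.G.dist N.o x → N.lap f x ≤ 0) {m : ℝ}
    (hsphere : ∀ v, N.G.dist N.o v = r → m ≤ f v) {w : V} (hw : r ≤ N.G.dist N.o w) :
    m ≤ f w := by
  set g : V → ℝ := fun x => if N.G.dist N.o x < r then max m (f x) else f x with hg
  have g_eq {x : V} (hx : r ≤ N.G.dist N.o x) : g x = f x := if_neg hx.not_gt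
  have g_nonneg (x : V) : 0 ≤ g x := by
    simp only [hg]
    split_ifs
    exacts [(hf x).trans (le_max_right _ _), hf x]
  have le_g {x : V} (hx : N.G.dist N.o x ≤ r) : m ≤ g x := by
    rcases hx.lt_or_eq with hlt | heq
    · simp [hg, hlt]
    · exact (hsphere x heq).trans_eq (g_eq heq.ge).symm
  have lap_g_nonpos (x : V) (hx : g x < m) : N.lap g x ≤ 0 := by
    have hrx : r < N.G.dist N.o x := not_le.1 fun h => hx.not_ge (le_g h)
    refine (lap_le_lap (g_eq hrx.le).ge fun y hxy => (g_eq ?_).le).trans (hlap x hrx)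
    have := hxy.diff_dist_adj (u := N.o)
    omega
  exact (hrec.le_of_le_root g_nonneg (le_g (by simp)) lap_g_nonpos w).trans_eq (g_eq hw)

end MinimumPrinciple

section Potential

theorem IsPotential.nonneg {h : V → ℝ} (hh : N.IsPotential h) (v : V) : 0 ≤ h v :=
  hh.1 v

theorem IsPotential.lap_eq_ite {h : V → ℝ} (hh : N.IsPotential h) (v : V) :
    N.lap h v = if v = N.o then 1 else 0 := by
  split_ifs with hv
  · rw [hv, hh.2.2.1]
  · exact hh.2.2.2 v hv

variable (N) in
theorem exists_forall_isPotential_le (v : V) : ∃ K, ∀ h, N.IsPotential h → h v ≤ K := by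
  have hreach := (SimpleGraph.reachable_iff_reflTransGen _ _).1 (N.connected N.o v)
  induction hreach with
  | refl => exact ⟨0, fun h hh => hh.2.1.le⟩
  | @tail x y _ hxy ih =>
    obtain ⟨K, hK⟩ := ih
    refine ⟨(1 + N.cv x * K) / N.c x y, fun h hh => ?_⟩
    rw [le_div_iff₀' (N.c_pos x y hxy)]
    have lap_le_one : N.lap h x ≤ 1 := by
      rw [hh.lap_eq_ite]; split_ifs <;> norm_num
    calc N.c x y * h y ≤ N.lap h x + N.cv x * h x := c_mul_le_lap_add hh.nonneg hxy
      _ ≤ 1 + N.cv x * K :=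
        add_le_add lap_le_one (mul_le_mul_of_nonneg_left (hK h hh) (N.cv_nonneg x))

variable {ι : Type*} {a : ι → ℝ} {ψ : ι → V → ℝ}

theorem IsPotential.summable_mul (hψ : ∀ i, N.IsPotential (ψ i)) (ha : ∀ i, 0 ≤ a i)
    (hsum : Summable a) (v : V) : Summable fun i => a i * ψ i v := by
  obtain ⟨K, hK⟩ := N.exists_forall_isPotential_le v
  exact (hsum.mul_right K).of_nonneg_of_le (fun i => mul_nonneg (ha i) ((hψ i).nonneg v))
    fun i => mul_le_mul_of_nonneg_left (hK _ (hψ i)) (ha i)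

theorem IsPotential.tsum_mul (hψ : ∀ i, N.IsPotential (ψ i)) (ha : ∀ i, 0 ≤ a i)
    (hsum : HasSum a 1) : N.IsPotential fun v => ∑' i, a i * ψ i v := by
  have hlap (v : V) :
      N.lap (fun v => ∑' i, a i * ψ i v) v = if v = N.o then 1 else 0 := by
    refine (N.hasSum_lap (fun v => (summable_mul hψ ha hsum.summable v).hasSum) v).unique ?_
    simp only [lap_const_mul, (hψ _).lap_eq_ite]
    simpa using hsum.mul_right (if v = N.o then 1 else 0)
  refine ⟨fun v => tsum_nonneg fun i => mul_nonneg (ha i) ((hψ i).nonneg v), ?_, ?_, ?_⟩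
  · simp [(hψ _).2.1]
  · rw [hlap, if_pos rfl]
  · intro v hv
    rw [hlap, if_neg hv]

theorem Recurrent.setOf_tsum_mul_lt_subset (hrec : N.Recurrent)
    (hψ : ∀ i, N.IsPotential (ψ i)) (ha : ∀ i, 0 ≤ a i) (hsum : Summable a) (i : ι) {r : ℕ} {m : ℝ}
    (hsphere : ∀ v, N.G.dist N.o v = r → m ≤ ψ i v) :
    {v | ∑' j, a j * ψ j v < a i * m} ⊆ {w | N.G.dist N.o w < r} := by
  intro v
  simp only [Set.mem_ofPred_eq]
  contrapose!
  intro hrv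
  have lap_nonpos (x : V) (hx : r < N.G.dist N.o x) : N.lap (ψ i) x ≤ 0 :=
    ((hψ i).2.2.2 x (by rintro rfl; simp at hx)).le
  calc a i * m ≤ a i * ψ i v := mul_le_mul_of_nonneg_left
        (hrec.le_of_le_on_sphere (hψ i).nonneg lap_nonpos hsphere hrv) (ha i)
    _ ≤ ∑' j, a j * ψ j v := (IsPotential.summable_mul hψ ha hsum v).le_tsum i
        fun j _ => mul_nonneg (ha j) ((hψ j).nonneg v)

end Potential

end RootedNetwork

/-- On a recurrent rooted network, if for each `n ≥ 1` the potential `ψ_n` and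
radius `r_n` satisfy `min_{v ∈ ∂B(o,r_n)} ψ_n(v) ≥ n·2^n`, then
`h = Σ_{n ≥ 1} 2^{-n} ψ_n` is a potential, for each `n ≥ 1` the set
`{v : h(v) < n}` is contained in `B(o,r_n)` and hence finite, and in
particular `h` tends to infinity. -/
theorem combined_potential_tendsto_infinity {V : Type*} (N : RootedNetwork V)
    (hrec : N.Recurrent) (r : ℕ → ℕ) (ψ : ℕ → V → ℝ)
    (hpot : ∀ n : ℕ, 1 ≤ n → N.IsPotential (ψ n))
    (hmin : ∀ n : ℕ, 1 ≤ n → ∀ v : V, N.G.dist N.o v = r n →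
      (n : ℝ) * 2 ^ n ≤ ψ n v) :
    N.IsPotential (fun v => ∑' n : ℕ, if 1 ≤ n then (2 : ℝ)⁻¹ ^ n * ψ n v else 0) ∧
    (∀ n : ℕ, 1 ≤ n →
      {v : V | (∑' m : ℕ, if 1 ≤ m then (2 : ℝ)⁻¹ ^ m * ψ m v else 0) < n}
        ⊆ {w : V | N.G.dist N.o w < r n} ∧
      {v : V | (∑' m : ℕ, if 1 ≤ m then (2 : ℝ)⁻¹ ^ m * ψ m v else 0) < n}.Finite) ∧
    (∀ M : ℝ, 0 < M →
      {v : V | (∑' m : ℕ, if 1 ≤ m then (2 : ℝ)⁻¹ ^ m * ψ m v else 0) ≤ M}.Finite) := by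
  simp only [tsum_ite_one_le]
  have hψ (k : ℕ) : N.IsPotential (ψ (k + 1)) := hpot (k + 1) k.succ_pos
  have ha (k : ℕ) : (0 : ℝ) ≤ 2⁻¹ ^ (k + 1) := by positivity
  have hsum : HasSum (fun k : ℕ => (2 : ℝ)⁻¹ ^ (k + 1)) 1 := by
    simpa [pow_succ', div_eq_mul_inv] using hasSum_geometric_two' (1 : ℝ)
  have hsub (n : ℕ) (hn : 1 ≤ n) :
      {v | ∑' k, (2 : ℝ)⁻¹ ^ (k + 1) * ψ (k + 1) v < n} ⊆ {w | N.G.dist N.o w < r n} := by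
    obtain ⟨k, rfl⟩ := Nat.exists_eq_add_of_le' hn
    have hweight : (2 : ℝ)⁻¹ ^ (k + 1) * ((k + 1 : ℕ) * 2 ^ (k + 1)) = (k + 1 : ℕ) := by
      rw [inv_pow, mul_comm, mul_inv_cancel_right₀ (by positivity)]
    simpa only [hweight] using
      hrec.setOf_tsum_mul_lt_subset hψ ha hsum.summable k (hmin (k + 1) hn)
  have hfin (n : ℕ) (hn : 1 ≤ n) := (finite_setOf_dist_lt N.connected N.locallyFinite N.o
    (r n)).subset (hsub n hn)
  refine ⟨.tsum_mul hψ ha hsum, fun n hn => ⟨hsub n hn, hfin n hn⟩, fun M hM => ?_⟩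
  obtain ⟨n, hMn⟩ := exists_nat_gt M
  exact (hfin n (Nat.cast_pos.1 (hM.trans hMn))).subset fun v hv => lt_of_le_of_lt hv hMn
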